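/- arXiv:1101.4718 — 8 statements merged into one kernel-verified Lean document; each statement's English description precedes it below -/
import Mathlib

section
/- Let λ ∈ (0,1) and ξ > 0, and let (u_k)_{k≥0} be a sequence of nonnegative real numbers such that u_{k+1} ≤ (1 − λ/(k+1)) u_k + ξ/(k+1)² for every k ≥ 0. Then for every k ≥ 0, u_{k+1} ≤ (k+1)^{−λ} · (u_0 + 2^λ ξ (2 − λ)/(1 − λ)). -/
/-!
The weight `w k = (k + 1) ^ (-lam)` is a supersolution of the homogeneous recursion
`w (k + 1) = (1 - lam / (k + 1)) * w k`, by Bernoulli's inequality for the exponent `-lam`.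
Variation of constants turns the noise `ξ / (k + 1) ^ 2` into the correction
`ξ * ∑ (i + 2) ^ lam / (i + 1) ^ 2`. Since `i + 2 ≤ 2 * (i + 1)`, this is at most `2 ^ lam * ξ`
times a partial sum of `ζ (2 - lam)`, and `ζ s ≤ s / (s - 1)` gives the constant.
-/

open Finset

theorem le_mul_add_sum_div_of_le_mul_add {K : Type*} [Field K] [LinearOrder K]
    [IsStrictOrderedRing K] {u a b w : ℕ → K} (hu₀ : 0 ≤ u 0) (ha : ∀ k, 0 ≤ a k)
    (hb : ∀ k, 0 ≤ b k) (hw : ∀ k, 0 < w k) (haw : ∀ k, a k * w k ≤ w (k + 1))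
    (hu : ∀ k, u (k + 1) ≤ a k * u k + b k) (k : ℕ) :
    u k ≤ w k * (u 0 / w 0 + ∑ i ∈ range k, b i / w (i + 1)) := by
  induction k with
  | zero => simp [mul_div_cancel₀ _ (hw 0).ne']
  | succ k ih =>
    rw [sum_range_succ, ← add_assoc]
    set B := u 0 / w 0 + ∑ i ∈ range k, b i / w (i + 1)
    have hB : 0 ≤ B :=
      add_nonneg (div_nonneg hu₀ (hw 0).le)
        (sum_nonneg fun i _ ↦ div_nonneg (hb i) (hw (i + 1)).le)
    calc u (k + 1)
      _ ≤ a k * u k + b k := hu k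
      _ ≤ a k * (w k * B) + b k := by gcongr; exact ha k
      _ = a k * w k * B + b k := by rw [mul_assoc]
      _ ≤ w (k + 1) * B + b k := by gcongr; exact haw k
      _ = w (k + 1) * (B + b k / w (k + 1)) := by
        rw [mul_add _ B, mul_div_cancel₀ _ (hw (k + 1)).ne']

theorem one_sub_mul_le_one_add_rpow_neg {x p : ℝ} (hx : -1 < x) (hp : 0 ≤ p) :
    1 - p * x ≤ (1 + x) ^ (-p) := by
  have hpos : 0 < 1 + x := by linarith
  have hlog : Real.log (1 + x) ≤ x := by linarith [Real.log_le_sub_one_of_pos hpos]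
  calc 1 - p * x
    _ ≤ 1 - p * Real.log (1 + x) := by gcongr
    _ = Real.log (1 + x) * -p + 1 := by ring
    _ ≤ Real.exp (Real.log (1 + x) * -p) := Real.add_one_le_exp _
    _ = (1 + x) ^ (-p) := (Real.rpow_def_of_pos hpos _).symm

theorem one_sub_div_mul_rpow_neg_le {x p : ℝ} (hx : 0 < x) (hp : 0 ≤ p) :
    (1 - p / x) * x ^ (-p) ≤ (x + 1) ^ (-p) := by
  have hinv : 0 < x⁻¹ := inv_pos.mpr hx
  calc (1 - p / x) * x ^ (-p)
    _ ≤ (1 + x⁻¹) ^ (-p) * x ^ (-p) := by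
      gcongr
      exact one_sub_mul_le_one_add_rpow_neg (by linarith) hp
    _ = ((1 + x⁻¹) * x) ^ (-p) := (Real.mul_rpow (by positivity) hx.le).symm
    _ = (x + 1) ^ (-p) := by rw [add_mul, one_mul, inv_mul_cancel₀ hx.ne']

theorem le_rpow_neg_mul_add_sum {p : ℝ} (hp₀ : 0 ≤ p) (hp₁ : p ≤ 1) {u b : ℕ → ℝ}
    (hu₀ : 0 ≤ u 0) (hb : ∀ k, 0 ≤ b k)
    (hu : ∀ k : ℕ, u (k + 1) ≤ (1 - p / (k + 1)) * u k + b k) (k : ℕ) :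
    u k ≤ ((k : ℝ) + 1) ^ (-p) * (u 0 + ∑ i ∈ range k, ((i : ℝ) + 2) ^ p * b i) := by
  have hcoeff (i : ℕ) : 0 ≤ 1 - p / ((i : ℝ) + 1) :=
    sub_nonneg.mpr (div_le_one_of_le₀ (by linarith [i.cast_nonneg (α := ℝ)]) (by positivity))
  have hsuper (i : ℕ) :
      (1 - p / ((i : ℝ) + 1)) * ((i : ℝ) + 1) ^ (-p) ≤ (((i + 1 : ℕ) : ℝ) + 1) ^ (-p) := by
    simpa only [Nat.cast_add_one] using one_sub_div_mul_rpow_neg_le i.cast_add_one_pos hp₀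
  have hterm (i : ℕ) : b i / (((i + 1 : ℕ) : ℝ) + 1) ^ (-p) = ((i : ℝ) + 2) ^ p * b i := by
    rw [Real.rpow_neg (by positivity), div_inv_eq_mul, mul_comm, Nat.cast_add_one, add_assoc,
      one_add_one_eq_two]
  simpa only [hterm, Nat.cast_zero, zero_add, Real.one_rpow, div_one] using
    le_mul_add_sum_div_of_le_mul_add (w := fun i ↦ ((i : ℝ) + 1) ^ (-p)) hu₀ hcoeff hb
      (fun i ↦ by positivity) hsuper hu k

theorem integral_one_rpow_neg_le {s x : ℝ} (hs : 1 < s) (hx : 0 < x) :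
    ∫ t in (1 : ℝ)..x, t ^ (-s) ≤ 1 / (s - 1) := by
  have hzero : (0 : ℝ) ∉ Set.uIcc 1 x := Set.notMem_uIcc_of_lt one_pos hx
  rw [integral_rpow (Or.inr ⟨by linarith, hzero⟩), Real.one_rpow, ← neg_div_neg_eq]
  have hpow : 0 ≤ x ^ (-s + 1) := by positivity
  rw [show -(-s + 1) = s - 1 by ring]
  gcongr
  all_goals linarith

theorem sum_range_add_one_rpow_neg_le {s : ℝ} (hs : 1 < s) (n : ℕ) :
    ∑ i ∈ range n, ((i : ℝ) + 1) ^ (-s) ≤ s / (s - 1) := by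
  cases n with
  | zero => simpa using div_nonneg (by linarith) (by linarith : 0 ≤ s - 1)
  | succ n =>
    have hanti : AntitoneOn (fun t : ℝ ↦ t ^ (-s)) (Set.Icc 1 (1 + n)) :=
      (Real.antitoneOn_rpow_Ioi_of_exponent_nonpos (by linarith)).mono
        fun t ht ↦ one_pos.trans_le ht.1
    have htail : ∑ i ∈ range n, (((i + 1 : ℕ) : ℝ) + 1) ^ (-s) ≤ 1 / (s - 1) :=
      calc ∑ i ∈ range n, (((i + 1 : ℕ) : ℝ) + 1) ^ (-s)
        _ = ∑ i ∈ range n, (1 + ((i + 1 : ℕ) : ℝ)) ^ (-s) := by simp only [add_comm]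
        _ ≤ ∫ t in (1 : ℝ)..1 + n, t ^ (-s) := hanti.sum_le_integral
        _ ≤ 1 / (s - 1) := integral_one_rpow_neg_le hs (by positivity)
    calc ∑ i ∈ range (n + 1), ((i : ℝ) + 1) ^ (-s)
      _ = ∑ i ∈ range n, (((i + 1 : ℕ) : ℝ) + 1) ^ (-s) + 1 := by
        rw [sum_range_succ', Nat.cast_zero, zero_add, Real.one_rpow]
      _ ≤ 1 / (s - 1) + 1 := by gcongr
      _ = s / (s - 1) := by rw [div_add_one (sub_pos.mpr hs).ne', add_sub_cancel]

theorem add_one_rpow_div_rpow_le {x p q : ℝ} (hx : 1 ≤ x) (hp : 0 ≤ p) :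
    (x + 1) ^ p / x ^ q ≤ 2 ^ p * x ^ (-(q - p)) := by
  have hpos : 0 < x := by linarith
  calc (x + 1) ^ p / x ^ q
    _ ≤ (2 * x) ^ p / x ^ q := by gcongr; linarith
    _ = 2 ^ p * x ^ (-(q - p)) := by
      rw [Real.mul_rpow zero_le_two hpos.le, neg_sub, Real.rpow_sub hpos, mul_div_assoc]

theorem sum_range_add_two_rpow_div_rpow_le {p q : ℝ} (hp : 0 ≤ p) (hpq : 1 < q - p) (n : ℕ) :
    ∑ i ∈ range n, ((i : ℝ) + 2) ^ p / ((i : ℝ) + 1) ^ q ≤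
      2 ^ p * ((q - p) / (q - p - 1)) := by
  have hterm (i : ℕ) :
      ((i : ℝ) + 2) ^ p / ((i : ℝ) + 1) ^ q ≤ 2 ^ p * ((i : ℝ) + 1) ^ (-(q - p)) := by
    rw [show (i : ℝ) + 2 = i + 1 + 1 by ring]
    exact add_one_rpow_div_rpow_le (by simp) hp
  calc ∑ i ∈ range n, ((i : ℝ) + 2) ^ p / ((i : ℝ) + 1) ^ q
    _ ≤ ∑ i ∈ range n, 2 ^ p * ((i : ℝ) + 1) ^ (-(q - p)) := sum_le_sum fun i _ ↦ hterm i
    _ = 2 ^ p * ∑ i ∈ range n, ((i : ℝ) + 1) ^ (-(q - p)) := (mul_sum ..).symm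
    _ ≤ 2 ^ p * ((q - p) / (q - p - 1)) := by
      gcongr
      exact sum_range_add_one_rpow_neg_le hpq n

theorem stmt_0_general {lam ξ : ℝ} (hlam0 : 0 ≤ lam) (hlam1 : lam < 1) (hξ : 0 ≤ ξ)
    {u : ℕ → ℝ} (hu₀ : 0 ≤ u 0)
    (hrec : ∀ k : ℕ, u (k + 1) ≤ (1 - lam / (k + 1)) * u k + ξ / (k + 1) ^ 2) (k : ℕ) :
    u (k + 1) ≤ ((k : ℝ) + 1) ^ (-lam) * (u 0 + 2 ^ lam * ξ * (2 - lam) / (1 - lam)) := by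
  have hbound := le_rpow_neg_mul_add_sum hlam0 hlam1.le hu₀ (fun i ↦ by positivity) hrec (k + 1)
  have hsum : ∑ i ∈ range (k + 1), ((i : ℝ) + 2) ^ lam * (ξ / ((i : ℝ) + 1) ^ 2) ≤
      2 ^ lam * ξ * (2 - lam) / (1 - lam) :=
    calc ∑ i ∈ range (k + 1), ((i : ℝ) + 2) ^ lam * (ξ / ((i : ℝ) + 1) ^ 2)
      _ = ξ * ∑ i ∈ range (k + 1), ((i : ℝ) + 2) ^ lam / ((i : ℝ) + 1) ^ (2 : ℝ) := by
        simp only [mul_sum, Real.rpow_two, mul_div_left_comm]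
      _ ≤ ξ * (2 ^ lam * ((2 - lam) / (2 - lam - 1))) := by
        gcongr
        exact sum_range_add_two_rpow_div_rpow_le hlam0 (by linarith) (k + 1)
      _ = 2 ^ lam * ξ * (2 - lam) / (1 - lam) := by ring_nf
  have hweight : (((k + 1 : ℕ) : ℝ) + 1) ^ (-lam) ≤ ((k : ℝ) + 1) ^ (-lam) :=
    Real.rpow_le_rpow_of_nonpos (by positivity) (by simp) (by linarith)
  exact hbound.trans (by gcongr)

/-- Case 0 < λ < 1 of the lemma on recursively bounded nonnegative sequences. -/
theorem stmt_0 (lam ξ : ℝ) (hlam0 : 0 < lam) (hlam1 : lam < 1) (hξ : 0 < ξ)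
    (u : ℕ → ℝ) (hu : ∀ k, 0 ≤ u k)
    (hrec : ∀ k : ℕ, u (k + 1) ≤ (1 - lam / (k + 1)) * u k + ξ / (k + 1) ^ 2) :
    ∀ k : ℕ, u (k + 1) ≤ ((k : ℝ) + 1) ^ (-lam) * (u 0 + 2 ^ lam * ξ * (2 - lam) / (1 - lam)) :=
  stmt_0_general hlam0.le hlam1 hξ.le (hu 0) hrec
end

section
/- Let ξ > 0 and let (u_k)_{k≥0} be a sequence of nonnegative real numbers such that u_{k+1} ≤ (1 − 1/(k+1)) u_k + ξ/(k+1)² for every k ≥ 0. Then for every k ≥ 0, u_{k+1} ≤ ξ (1 + log(k+1))/(k+1). -/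
/-!
Multiplying the recursion by `k + 1` turns it into `(k + 1) u_{k+1} ≤ k u_k + ξ / (k + 1)`, since
`(k + 1) (1 - 1 / (k + 1)) = k`. This telescopes to `n u_n ≤ ξ H_n`, where `H_n` is the `n`-th
harmonic number, and `H_n ≤ 1 + log n`.
-/

section Recursion

variable {K : Type*} [Field K] [LinearOrder K] [IsStrictOrderedRing K] {u : ℕ → K}

theorem natCast_mul_le_sum_of_le_one_sub_mul_add {b : ℕ → K}
    (hrec : ∀ k : ℕ, u (k + 1) ≤ (1 - 1 / (k + 1)) * u k + b k) (n : ℕ) :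
    n * u n ≤ ∑ k ∈ Finset.range n, (k + 1) * b k := by
  induction n with
  | zero => simp
  | succ n ih =>
    calc ((n + 1 : ℕ) : K) * u (n + 1)
        = (n + 1) * u (n + 1) := by rw [Nat.cast_add_one]
      _ ≤ (n + 1) * ((1 - 1 / (n + 1)) * u n + b n) := by gcongr; exact hrec n
      _ = n * u n + (n + 1) * b n := by field_simp; ring
      _ ≤ ∑ k ∈ Finset.range n, (k + 1) * b k + (n + 1) * b n := by gcongr
      _ = ∑ k ∈ Finset.range (n + 1), (k + 1) * b k := (Finset.sum_range_succ _ n).symm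

theorem natCast_mul_le_mul_harmonic_of_le_one_sub_mul_add {c : K}
    (hrec : ∀ k : ℕ, u (k + 1) ≤ (1 - 1 / (k + 1)) * u k + c / (k + 1) ^ 2) (n : ℕ) :
    n * u n ≤ c * (harmonic n : K) := by
  calc n * u n
      ≤ ∑ k ∈ Finset.range n, (k + 1) * (c / (k + 1) ^ 2) :=
        natCast_mul_le_sum_of_le_one_sub_mul_add hrec n
    _ = ∑ k ∈ Finset.range n, c * ((k : K) + 1)⁻¹ := by
        refine Finset.sum_congr rfl fun k _ ↦ ?_
        have hk : (k : K) + 1 ≠ 0 := k.cast_add_one_ne_zero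
        field_simp
    _ = c * (harmonic n : K) := by simp [harmonic, Finset.mul_sum]

end Recursion

theorem stmt_1_general {ξ : ℝ} (hξ : 0 ≤ ξ) {u : ℕ → ℝ}
    (hrec : ∀ k : ℕ, u (k + 1) ≤ (1 - 1 / (k + 1)) * u k + ξ / (k + 1) ^ 2) (k : ℕ) :
    u (k + 1) ≤ ξ * (1 + Real.log ((k : ℝ) + 1)) / ((k : ℝ) + 1) := by
  rw [le_div_iff₀' k.cast_add_one_pos, ← Nat.cast_add_one]
  calc ((k + 1 : ℕ) : ℝ) * u (k + 1)
      ≤ ξ * harmonic (k + 1) := natCast_mul_le_mul_harmonic_of_le_one_sub_mul_add hrec (k + 1)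
    _ ≤ ξ * (1 + Real.log ((k + 1 : ℕ) : ℝ)) := by
        gcongr
        exact harmonic_le_one_add_log (k + 1)

/-- Case λ = 1 of the lemma on recursively bounded nonnegative sequences. -/
theorem stmt_1 (ξ : ℝ) (hξ : 0 < ξ)
    (u : ℕ → ℝ) (hu : ∀ k, 0 ≤ u k)
    (hrec : ∀ k : ℕ, u (k + 1) ≤ (1 - 1 / (k + 1)) * u k + ξ / (k + 1) ^ 2) :
    ∀ k : ℕ, u (k + 1) ≤ ξ * (1 + Real.log ((k : ℝ) + 1)) / ((k : ℝ) + 1) :=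
  stmt_1_general hξ.le hrec
end

section
/- Let λ > 1 and ξ > 0, and let (u_k)_{k≥0} be a sequence of nonnegative real numbers such that u_{k+1} ≤ (1 − λ/(k+1)) u_k + ξ/(k+1)² for every k ≥ 0. Then for every k ≥ 1, u_k ≤ ξ · max(1, 1/(λ−1)) / k; in particular u_k = O(1/k). -/
/-!
The bound on `u (k + 1)` is affine in `u k`. If `0 ≤ u k ≤ C / k`, it is therefore at most the
larger of its values at the endpoints `0` and `C / k`, whatever the sign of `1 - lam / (k + 1)`.
Both values are at most `C / (k + 1)`: the first because `ξ ≤ C`, the second because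
`ξ ≤ C * (lam - 1)`. The smallest such `C` is `ξ * max 1 (1 / (lam - 1))`.
-/

section OrderedRing

variable {R : Type*} [Ring R] [LinearOrder R] [IsOrderedRing R]

lemma mul_add_le_of_endpoints_le {a b c x y : R} (hx : 0 ≤ x) (hxy : x ≤ y)
    (hleft : b ≤ c) (hright : a * y + b ≤ c) : a * x + b ≤ c := by
  rcases le_total a 0 with ha | ha
  · exact (add_le_of_nonpos_left (mul_nonpos_of_nonpos_of_nonneg ha hx)).trans hleft
  · exact (add_le_add_left (mul_le_mul_of_nonneg_left hxy ha) b).trans hright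

lemma le_of_succ_le_mul_add {a b u v : ℕ → R} {m : ℕ} (hu : ∀ k ≥ m, 0 ≤ u k)
    (hrec : ∀ k ≥ m, u (k + 1) ≤ a k * u k + b k) (hinit : u m ≤ v m)
    (hb : ∀ k ≥ m, b k ≤ v (k + 1)) (hv : ∀ k ≥ m, a k * v k + b k ≤ v (k + 1)) :
    ∀ k ≥ m, u k ≤ v k := by
  intro k hk
  induction k, hk using Nat.le_induction with
  | base => exact hinit
  | succ k hk ih =>
    exact (hrec k hk).trans (mul_add_le_of_endpoints_le (hu k hk) ih (hb k hk) (hv k hk))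

end OrderedRing

section OrderedField

variable {K : Type*} [Field K] [LinearOrder K] [IsStrictOrderedRing K] {lam ξ C t : K}

lemma div_add_one_sq_le_div_add_one (hC : 0 ≤ C) (hξC : ξ ≤ C) (ht : 0 ≤ t) :
    ξ / (t + 1) ^ 2 ≤ C / (t + 1) := by
  have hsq : t + 1 ≤ (t + 1) ^ 2 := le_self_pow₀ (by linarith) two_ne_zero
  gcongr

lemma one_sub_div_mul_div_add_le_div_add_one (hξ : 0 ≤ ξ) (hξC : ξ ≤ C * (lam - 1)) (ht : 0 < t) :
    (1 - lam / (t + 1)) * (C / t) + ξ / (t + 1) ^ 2 ≤ C / (t + 1) := by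
  have hnum : 0 ≤ C * (lam - 1) * (t + 1) - ξ * t :=
    sub_nonneg.2 (mul_le_mul hξC (by linarith) ht.le (hξ.trans hξC))
  have hslack : C / (t + 1) - ((1 - lam / (t + 1)) * (C / t) + ξ / (t + 1) ^ 2)
      = (C * (lam - 1) * (t + 1) - ξ * t) / (t * (t + 1) ^ 2) := by
    field_simp
    ring
  rw [← sub_nonneg, hslack]
  positivity

lemma apply_one_le_of_succ_le {u : ℕ → K} (hlam : 1 ≤ lam) (hu : 0 ≤ u 0)
    (hrec : ∀ k : ℕ, u (k + 1) ≤ (1 - lam / (k + 1)) * u k + ξ / (k + 1) ^ 2) : u 1 ≤ ξ := by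
  have hcoeff : (1 - lam) * u 0 ≤ 0 := mul_nonpos_of_nonpos_of_nonneg (sub_nonpos.2 hlam) hu
  have hrec_zero : u 1 ≤ (1 - lam) * u 0 + ξ := by simpa using hrec 0
  linarith

lemma le_div_natCast_of_succ_le {u : ℕ → K} (hlam : 1 ≤ lam) (hξC : ξ ≤ C)
    (hξC' : ξ ≤ C * (lam - 1)) (hu : ∀ k, 0 ≤ u k)
    (hrec : ∀ k : ℕ, u (k + 1) ≤ (1 - lam / (k + 1)) * u k + ξ / (k + 1) ^ 2) :
    ∀ k ≥ 1, u k ≤ C / k := by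
  have hu_one : u 1 ≤ ξ := apply_one_le_of_succ_le hlam (hu 0) hrec
  have hξ : 0 ≤ ξ := (hu 1).trans hu_one
  refine le_of_succ_le_mul_add (v := fun k ↦ C / k) (fun k _ ↦ hu k) (fun k _ ↦ hrec k) ?_ ?_ ?_
  · simpa using hu_one.trans hξC
  · intro k _
    simpa using div_add_one_sq_le_div_add_one (hξ.trans hξC) hξC k.cast_nonneg
  · intro k hk
    simpa using one_sub_div_mul_div_add_le_div_add_one hξ hξC' (Nat.cast_pos.2 hk)

theorem stmt_2_general (hlam : 1 < lam) {u : ℕ → K} (hu : ∀ k, 0 ≤ u k)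
    (hrec : ∀ k : ℕ, u (k + 1) ≤ (1 - lam / (k + 1)) * u k + ξ / (k + 1) ^ 2) :
    ∀ k ≥ 1, u k ≤ ξ * max 1 (1 / (lam - 1)) / k := by
  have hξ : 0 ≤ ξ := (hu 1).trans (apply_one_le_of_succ_le hlam.le (hu 0) hrec)
  have hmax : 1 ≤ max 1 (1 / (lam - 1)) * (lam - 1) :=
    (div_le_iff₀ (sub_pos.2 hlam)).1 (le_max_right _ _)
  refine le_div_natCast_of_succ_le hlam.le ?_ ?_ hu hrec
  · exact le_mul_of_one_le_right hξ (le_max_left _ _)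
  · rw [mul_assoc]
    exact le_mul_of_one_le_right hξ hmax

end OrderedField

/-- Case λ > 1 of the lemma on recursively bounded nonnegative sequences:
`u k = O(1/k)` with the explicit constant `ξ * max 1 (1/(λ-1))`. -/
theorem stmt_2 (lam ξ : ℝ) (hlam : 1 < lam) (hξ : 0 < ξ)
    (u : ℕ → ℝ) (hu : ∀ k, 0 ≤ u k)
    (hrec : ∀ k : ℕ, u (k + 1) ≤ (1 - lam / (k + 1)) * u k + ξ / (k + 1) ^ 2) :
    ∀ k : ℕ, 1 ≤ k → u k ≤ ξ * max 1 (1 / (lam - 1)) / k :=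
  stmt_2_general hlam hu hrec
end

section
/- Let α > 0 and let a, b, r, r*, R0 be positive real numbers with b ≤ r* ≤ a, R0/2 ≤ r, α a < π, α r < π/2 and α r* < π/2. Then (cos(α b) − cos(α r) cos(α a)) / (sin(α r) sin(α a)) ≥ cos(α r*) · tan(α R0 / 4). -/
/-! Put `A = α a`, `B = α b`, `R = α r`, `S = α rs`. In the extremal configuration `A = B = S` the
numerator is `cos S * (1 - cos R)`, which the half-angle identity turns into
`cos S * tan (R / 2) * sin R`. Since `cos A ≤ cos S ≤ cos B` and `0 ≤ cos R`, the numerator is at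
least this in general, and dividing by `sin R * sin A ≤ sin R` leaves at least
`cos S * tan (R / 2)`. Finally `α R0 / 4 ≤ R / 2 < π / 2`, where `tan` is increasing. -/

section

open Real

theorem tan_mul_sin_two_mul {x : ℝ} (hx : cos x ≠ 0) : tan x * sin (2 * x) = 1 - cos (2 * x) := by
  calc tan x * sin (2 * x) = 2 * sin x * (tan x * cos x) := by rw [sin_two_mul]; ring
    _ = 2 * sin x ^ 2 := by rw [tan_mul_cos hx]; ring
    _ = 1 - cos (2 * x) := by rw [sin_sq_eq_half_sub]; ring

theorem cos_mul_one_sub_cos_le_cos_sub_cos_mul_cos {A B R S : ℝ} (hB : 0 ≤ B) (hBS : B ≤ S)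
    (hSA : S ≤ A) (hA : A ≤ π) (hR : 0 ≤ cos R) :
    cos S * (1 - cos R) ≤ cos B - cos R * cos A := by
  have hcosAS : cos A ≤ cos S := cos_le_cos_of_nonneg_of_le_pi (hB.trans hBS) hA hSA
  have hcosSB : cos S ≤ cos B := cos_le_cos_of_nonneg_of_le_pi hB (hSA.trans hA) hBS
  calc cos S * (1 - cos R) = cos S - cos R * cos S := by ring
    _ ≤ cos B - cos R * cos A := by gcongr

theorem cos_mul_tan_half_le_spherical_cos_angle {A B R S : ℝ} (hB : 0 ≤ B) (hBS : B ≤ S)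
    (hSA : S ≤ A) (hS : S ≤ π / 2) (hA₀ : 0 < A) (hA : A < π) (hR₀ : 0 < R) (hR : R ≤ π / 2) :
    cos S * tan (R / 2) ≤ (cos B - cos R * cos A) / (sin R * sin A) := by
  have hcosS : 0 ≤ cos S := cos_nonneg_of_mem_Icc ⟨by linarith, hS⟩
  have hcosR : 0 ≤ cos R := cos_nonneg_of_mem_Icc ⟨by linarith, hR⟩
  have hsinR : 0 < sin R := sin_pos_of_pos_of_lt_pi hR₀ (by linarith)
  have hsinA : 0 < sin A := sin_pos_of_pos_of_lt_pi hA₀ hA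
  have half_angle : tan (R / 2) * sin R = 1 - cos R := by
    have hcos : cos (R / 2) ≠ 0 := (cos_pos_of_mem_Ioo ⟨by linarith, by linarith⟩).ne'
    simpa only [mul_div_cancel₀ R two_ne_zero] using tan_mul_sin_two_mul hcos
  rw [le_div_iff₀ (mul_pos hsinR hsinA)]
  calc cos S * tan (R / 2) * (sin R * sin A) = cos S * (1 - cos R) * sin A := by
        rw [← half_angle]; ring
    _ ≤ cos S * (1 - cos R) :=
        mul_le_of_le_one_right (mul_nonneg hcosS (sub_nonneg.mpr (cos_le_one R))) (sin_le_one A)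
    _ ≤ cos B - cos R * cos A :=
        cos_mul_one_sub_cos_le_cos_sub_cos_mul_cos hB hBS hSA hA.le hcosR

end

/-- Lower bound on the cosine of the angle at the current iterate in the spherical
comparison triangle. -/
theorem stmt_8 (α a b r rs R0 : ℝ) (hα : 0 < α) (ha : 0 < a) (hb : 0 < b) (hr : 0 < r)
    (hrs : 0 < rs) (hR0 : 0 < R0) (hbrs : b ≤ rs) (hrsa : rs ≤ a) (hR0r : R0 / 2 ≤ r)
    (haπ : α * a < Real.pi) (hrπ : α * r < Real.pi / 2) (hrsπ : α * rs < Real.pi / 2) :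
    (Real.cos (α * b) - Real.cos (α * r) * Real.cos (α * a)) /
        (Real.sin (α * r) * Real.sin (α * a)) ≥
      Real.cos (α * rs) * Real.tan (α * R0 / 4) := by
  have hR : 0 < α * r := mul_pos hα hr
  have hS : 0 < α * rs := mul_pos hα hrs
  have hcosS : 0 ≤ Real.cos (α * rs) := Real.cos_nonneg_of_mem_Icc ⟨by linarith, hrsπ.le⟩
  have htan : Real.tan (α * R0 / 4) ≤ Real.tan (α * r / 2) := by
    have hR0_pos : 0 < α * R0 := mul_pos hα hR0
    have hR0_le : α * (R0 / 2) ≤ α * r := by gcongr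
    exact Real.strictMonoOn_tan.monotoneOn ⟨by linarith, by linarith⟩ ⟨by linarith, by linarith⟩
      (by linarith)
  calc Real.cos (α * rs) * Real.tan (α * R0 / 4)
      ≤ Real.cos (α * rs) * Real.tan (α * r / 2) := by gcongr
    _ ≤ (Real.cos (α * b) - Real.cos (α * r) * Real.cos (α * a)) /
          (Real.sin (α * r) * Real.sin (α * a)) :=
        cos_mul_tan_half_le_spherical_cos_angle (mul_pos hα hb).le (by gcongr) (by gcongr)
          hrsπ.le (mul_pos hα ha) haπ hR hrπ.le
end

section
/- Let β > 0, K > 0, r > 0 and t ≥ 0 be real numbers with tanh(β t / 2) ≤ K · tanh(β r). Then cosh(β r) cosh(β t) − K sinh(β r) sinh(β t) ≤ cosh(β r). -/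
section HyperbolicIdentities

open Real

theorem cosh_sub_one_eq_sinh_mul_tanh_half (y : ℝ) : cosh y - 1 = sinh y * tanh (y / 2) := by
  obtain ⟨u, rfl⟩ : ∃ u, y = 2 * u := ⟨y / 2, by ring⟩
  have hu : cosh u ≠ 0 := (cosh_pos u).ne'
  rw [mul_div_cancel_left₀ u two_ne_zero, cosh_two_mul, sinh_two_mul, cosh_sq,
    tanh_eq_sinh_div_cosh]
  field_simp
  ring

theorem cosh_mul_cosh_sub_mul_sinh_mul_sinh_sub_cosh (K x y : ℝ) :
    cosh x * cosh y - K * sinh x * sinh y - cosh x =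
      cosh x * sinh y * (tanh (y / 2) - K * tanh x) := by
  have sinh_eq_cosh_mul_tanh : sinh x = cosh x * tanh x := by
    rw [tanh_eq_sinh_div_cosh, mul_div_cancel₀ _ (cosh_pos x).ne']
  calc cosh x * cosh y - K * sinh x * sinh y - cosh x
      = cosh x * (cosh y - 1) - K * sinh x * sinh y := by ring
    _ = cosh x * (sinh y * tanh (y / 2)) - K * (cosh x * tanh x) * sinh y := by
      rw [cosh_sub_one_eq_sinh_mul_tanh_half, ← sinh_eq_cosh_mul_tanh]
    _ = cosh x * sinh y * (tanh (y / 2) - K * tanh x) := by ring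

end HyperbolicIdentities

/-- Hyperbolic non-expansion estimate: under the step-size condition, the distance of
the iterate to the minimax center does not increase. -/
theorem stmt_9 (β K r t : ℝ) (hβ : 0 < β) (hK : 0 < K) (hr : 0 < r) (ht : 0 ≤ t)
    (h : Real.tanh (β * t / 2) ≤ K * Real.tanh (β * r)) :
    Real.cosh (β * r) * Real.cosh (β * t) - K * Real.sinh (β * r) * Real.sinh (β * t) ≤
      Real.cosh (β * r) := by
  have sinh_nonneg : 0 ≤ Real.sinh (β * t) := Real.sinh_nonneg_iff.2 (mul_nonneg hβ.le ht)
  rw [← sub_nonpos, cosh_mul_cosh_sub_mul_sinh_mul_sinh_sub_cosh]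
  exact mul_nonpos_of_nonneg_of_nonpos (mul_nonneg (Real.cosh_pos _).le sinh_nonneg)
    (sub_nonpos.2 h)
end

section
/- Let β > 0, K > 0, R0 > 0 and t > 0 be real numbers with tanh(β t / 2) ≤ K · tanh(β R0 / 2). Then cosh(β t) − K tanh(β R0) sinh(β t) ≤ 1 − K β t · (tanh(β R0) − tanh(β R0 / 2)). -/
/-!
The half-angle identity `cosh u - 1 = tanh (u / 2) * sinh u` turns an upper bound `b` on
`tanh (u / 2)` into `cosh u - a * sinh u ≤ 1 - (a - b) * sinh u`, and `u ≤ sinh u` makes this linear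
in `u` as soon as `b ≤ a`. The estimate is the case `u = β t`, `a = K tanh (β R0)`,
`b = K tanh (β R0 / 2)`.
-/

theorem tanh_strictMono : StrictMono Real.tanh := by
  intro x y hxy
  have hsinh : 0 < Real.sinh (y - x) := Real.sinh_pos_iff.2 (sub_pos.2 hxy)
  rw [Real.sinh_sub] at hsinh
  rw [Real.tanh_eq_sinh_div_cosh, Real.tanh_eq_sinh_div_cosh,
    div_lt_div_iff₀ (Real.cosh_pos x) (Real.cosh_pos y)]
  linarith

theorem cosh_sub_one_eq_tanh_half_mul_sinh (u : ℝ) :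
    Real.cosh u - 1 = Real.tanh (u / 2) * Real.sinh u := by
  obtain ⟨v, rfl⟩ : ∃ v, u = 2 * v := ⟨u / 2, by ring⟩
  rw [mul_div_cancel_left₀ v two_ne_zero]
  have hcosh : Real.cosh v ≠ 0 := (Real.cosh_pos v).ne'
  calc Real.cosh (2 * v) - 1
    _ = 2 * Real.sinh v ^ 2 := by rw [Real.cosh_two_mul, Real.cosh_sq]; ring
    _ = Real.tanh v * Real.sinh (2 * v) := by
      rw [Real.tanh_eq_sinh_div_cosh, Real.sinh_two_mul]
      field_simp

theorem cosh_sub_mul_sinh_le {a b u : ℝ} (hu : 0 ≤ u) (hb : Real.tanh (u / 2) ≤ b) (hba : b ≤ a) :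
    Real.cosh u - a * Real.sinh u ≤ 1 - (a - b) * u := by
  calc Real.cosh u - a * Real.sinh u
    _ = 1 + Real.tanh (u / 2) * Real.sinh u - a * Real.sinh u := by
      rw [← cosh_sub_one_eq_tanh_half_mul_sinh, add_sub_cancel]
    _ ≤ 1 + b * Real.sinh u - a * Real.sinh u := by gcongr
    _ = 1 - (a - b) * Real.sinh u := by ring
    _ ≤ 1 - (a - b) * u := by gcongr; exact Real.self_le_sinh_iff.2 hu

/-- Explicit hyperbolic contraction estimate used outside the ball `B(c, R0)`. -/
theorem stmt_10 (β K R0 t : ℝ) (hβ : 0 < β) (hK : 0 < K) (hR0 : 0 < R0) (ht : 0 < t)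
    (h : Real.tanh (β * t / 2) ≤ K * Real.tanh (β * R0 / 2)) :
    Real.cosh (β * t) - K * Real.tanh (β * R0) * Real.sinh (β * t) ≤
      1 - K * β * t * (Real.tanh (β * R0) - Real.tanh (β * R0 / 2)) := by
  have htanh : Real.tanh (β * R0 / 2) ≤ Real.tanh (β * R0) :=
    tanh_strictMono.monotone (half_le_self (by positivity))
  calc Real.cosh (β * t) - K * Real.tanh (β * R0) * Real.sinh (β * t)
    _ ≤ 1 - (K * Real.tanh (β * R0) - K * Real.tanh (β * R0 / 2)) * (β * t) :=
      cosh_sub_mul_sinh_le (by positivity) h (by gcongr)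
    _ = 1 - K * β * t * (Real.tanh (β * R0) - Real.tanh (β * R0 / 2)) := by ring
end

section
/- Let β > 0, K > 0, R0 > 0, t > 0 and r ≥ R0 be real numbers with tanh(β t / 2) ≤ K · tanh(β R0 / 2). Then cosh(β r) cosh(β t) − K sinh(β r) sinh(β t) ≤ (1 − η t) · cosh(β r), where η = K β (tanh(β R0) − tanh(β R0/2)) > 0. -/
/-!
The half-angle identity `cosh s = 1 + sinh s * tanh (s / 2)` gives
`cosh x * cosh s - K * sinh x * sinh s = (1 - sinh s * (K * tanh x - tanh (s / 2))) * cosh x`.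
For `x = β r` and `s = β t`, monotonicity of `tanh` and the step-size condition bound
`K * tanh x - tanh (s / 2)` below by `K * (tanh (β R0) - tanh (β R0 / 2)) > 0`, and `s ≤ sinh s`
makes the resulting rate linear in `t`.
-/

open Real

theorem strictMono_tanh : StrictMono tanh := fun x y hxy =>
  (artanh_lt_artanh_iff ⟨neg_one_lt_tanh x, tanh_lt_one x⟩ ⟨neg_one_lt_tanh y, tanh_lt_one y⟩).mp
    (by rwa [artanh_tanh, artanh_tanh])

theorem tanh_mul_cosh (x : ℝ) : tanh x * cosh x = sinh x := by
  rw [tanh_eq_sinh_div_cosh, div_mul_cancel₀ _ (cosh_pos x).ne']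

theorem cosh_eq_one_add_sinh_mul_tanh_half (x : ℝ) : cosh x = 1 + sinh x * tanh (x / 2) :=
  calc
    cosh x = cosh (x / 2) ^ 2 + sinh (x / 2) ^ 2 := by
      rw [← cosh_two_mul, mul_div_cancel₀ x two_ne_zero]
    _ = 1 + 2 * sinh (x / 2) * sinh (x / 2) := by rw [cosh_sq]; ring
    _ = 1 + 2 * sinh (x / 2) * cosh (x / 2) * tanh (x / 2) := by
      nth_rewrite 2 [← tanh_mul_cosh]; ring
    _ = 1 + sinh x * tanh (x / 2) := by rw [← sinh_two_mul, mul_div_cancel₀ x two_ne_zero]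

theorem cosh_mul_cosh_sub_mul_sinh_mul_sinh (K x s : ℝ) :
    cosh x * cosh s - K * sinh x * sinh s =
      (1 - sinh s * (K * tanh x - tanh (s / 2))) * cosh x := by
  rw [cosh_eq_one_add_sinh_mul_tanh_half s, ← tanh_mul_cosh x]
  ring

theorem cosh_mul_cosh_sub_mul_sinh_mul_sinh_le {K x s δ : ℝ} (hs : 0 ≤ s) (hδ : 0 ≤ δ)
    (h : δ ≤ K * tanh x - tanh (s / 2)) :
    cosh x * cosh s - K * sinh x * sinh s ≤ (1 - s * δ) * cosh x := by
  have hsinh : s ≤ sinh s := self_le_sinh_iff.mpr hs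
  have hrate : s * δ ≤ sinh s * (K * tanh x - tanh (s / 2)) :=
    mul_le_mul hsinh h hδ (hs.trans hsinh)
  rw [cosh_mul_cosh_sub_mul_sinh_mul_sinh]
  gcongr

/-- Geometric decay of `cosh (β ρ(c, x_k))` outside the ball `B(c, R0)`, with the
explicit rate `η = K β (tanh(β R0) − tanh(β R0/2)) > 0`. -/
theorem stmt_11 (β K R0 t r : ℝ) (hβ : 0 < β) (hK : 0 < K) (hR0 : 0 < R0) (ht : 0 < t)
    (hr : R0 ≤ r) (h : Real.tanh (β * t / 2) ≤ K * Real.tanh (β * R0 / 2)) :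
    0 < K * β * (Real.tanh (β * R0) - Real.tanh (β * R0 / 2)) ∧
      Real.cosh (β * r) * Real.cosh (β * t) - K * Real.sinh (β * r) * Real.sinh (β * t) ≤
        (1 - K * β * (Real.tanh (β * R0) - Real.tanh (β * R0 / 2)) * t) *
          Real.cosh (β * r) := by
  have hgap : 0 < tanh (β * R0) - tanh (β * R0 / 2) :=
    sub_pos.mpr (strictMono_tanh (half_lt_self (mul_pos hβ hR0)))
  refine ⟨by positivity, ?_⟩
  have hmono : K * tanh (β * R0) ≤ K * tanh (β * r) := by
    gcongr
    exact strictMono_tanh.monotone (by gcongr)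
  have hmargin : K * (tanh (β * R0) - tanh (β * R0 / 2)) ≤
      K * tanh (β * r) - tanh (β * t / 2) := by
    rw [mul_sub]
    exact sub_le_sub hmono h
  calc
    _ ≤ (1 - β * t * (K * (tanh (β * R0) - tanh (β * R0 / 2)))) * cosh (β * r) :=
      cosh_mul_cosh_sub_mul_sinh_mul_sinh_le (by positivity) (by positivity) hmargin
    _ = _ := by ring
end

section
/- Let E be a finite-dimensional real inner product space, let P ⊆ E be a nonempty finite set, let H(x) = max_{p ∈ P} ‖x − p‖, let c ∈ E be a minimizer of H over E, and let r* = H(c). Then for every x ∈ E, H(x)² ≥ r*² + ‖x − c‖². -/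
/-!
Each `‖· - p‖²` is strongly convex with the modulus `‖x - y‖²` of the squared norm, and a pointwise
supremum of functions with a common modulus of convexity keeps that modulus, so `H²` has it too.
A uniformly convex function grows away from a minimizer at least as fast as its modulus: compare
its values at `c` and at `t • x + (1 - t) • c`, divide by `t` and let `t → 0`.
-/

open Filter Set Topology

section UniformConvexity

variable {E : Type*} [NormedAddCommGroup E] [NormedSpace ℝ E] {s : Set E} {φ : ℝ → ℝ}

lemma uniformConvexOn_of_isLUB {ι : Type*} {I : Set ι} {f : ι → E → ℝ} {g : E → ℝ}
    (hs : Convex ℝ s) (hf : ∀ i ∈ I, UniformConvexOn s φ (f i))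
    (hg : ∀ x ∈ s, IsLUB ((f · x) '' I) (g x)) : UniformConvexOn s φ g := by
  refine ⟨hs, fun x hx y hy a b ha hb hab ↦ ?_⟩
  refine (hg _ (hs hx hy ha hb hab)).2 (forall_mem_image.2 fun i hi ↦ ?_)
  have hfx : f i x ≤ g x := (hg x hx).1 (mem_image_of_mem _ hi)
  have hfy : f i y ≤ g y := (hg y hy).1 (mem_image_of_mem _ hi)
  calc f i (a • x + b • y)
    _ ≤ a • f i x + b • f i y - a * b * φ ‖x - y‖ := (hf i hi).2 hx hy ha hb hab
    _ ≤ a • g x + b • g y - a * b * φ ‖x - y‖ := by gcongr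

lemma add_modulus_le_of_isMinOn {f : E → ℝ} {c x : E} (hf : UniformConvexOn s φ f)
    (hc : c ∈ s) (hmin : IsMinOn f s c) (hx : x ∈ s) : f c + φ ‖x - c‖ ≤ f x := by
  have hsegment : ∀ t ∈ Ioo (0 : ℝ) 1, f c + (1 - t) * φ ‖x - c‖ ≤ f x := by
    rintro t ⟨ht₀, ht₁⟩
    have ht : 0 ≤ 1 - t := sub_nonneg.2 ht₁.le
    have hcomb : f c ≤ t * f x + (1 - t) * f c - t * (1 - t) * φ ‖x - c‖ :=
      (hmin (hf.1 hx hc ht₀.le ht (add_sub_cancel t 1))).trans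
        (hf.2 hx hc ht₀.le ht (add_sub_cancel t 1))
    exact le_of_mul_le_mul_left (by linarith) ht₀
  have hlim : Tendsto (fun t : ℝ ↦ f c + (1 - t) * φ ‖x - c‖) (𝓝[>] 0) (𝓝 (f c + φ ‖x - c‖)) :=
    (Continuous.tendsto' (by fun_prop) _ _ (by simp)).mono_left nhdsWithin_le_nhds
  exact le_of_tendsto hlim (mem_of_superset (Ioo_mem_nhdsGT one_pos) hsegment)

end UniformConvexity

lemma isLUB_image_pow {A : Set ℝ} {a : ℝ} (hA : ∀ r ∈ A, 0 ≤ r) (ha : IsLUB A a) (n : ℕ) :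
    IsLUB ((· ^ n) '' A) (a ^ n) :=
  ha.isLUB_of_tendsto (pow_left_monotoneOn.mono hA) ha.nonempty
    ((continuous_pow n).tendsto a |>.mono_left nhdsWithin_le_nhds)

lemma isLUB_image_sup' {ι α : Type*} [SemilatticeSup α] {I : Finset ι} (hI : I.Nonempty)
    (f : ι → α) : IsLUB (f '' I) (I.sup' hI f) :=
  isLUB_iff_le_iff.2 fun b ↦ by simp [mem_upperBounds]

section FarthestDistance

variable {E : Type*} [NormedAddCommGroup E] [InnerProductSpace ℝ E] {s P : Set E} {H : E → ℝ}

lemma strongConvexOn_norm_sub_sq (hs : Convex ℝ s) (p : E) :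
    StrongConvexOn s 2 fun x ↦ ‖x - p‖ ^ 2 := by
  have haffine : (fun x ↦ ‖x - p‖ ^ 2 - 2 / 2 * ‖x‖ ^ 2) =
      fun x ↦ ((-2 : ℝ) • innerₗ E p) x + ‖p‖ ^ 2 := by
    ext x
    rw [norm_sub_sq_real, real_inner_comm, LinearMap.smul_apply, innerₗ_apply_apply, smul_eq_mul]
    ring
  rw [strongConvexOn_iff_convex, haffine]
  exact (((-2 : ℝ) • innerₗ E p).convexOn hs).add_const _

lemma strongConvexOn_sq_of_isLUB_norm_sub (hs : Convex ℝ s)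
    (hH : ∀ x ∈ s, IsLUB ((‖x - ·‖) '' P) (H x)) : StrongConvexOn s 2 fun x ↦ H x ^ 2 := by
  refine uniformConvexOn_of_isLUB hs (fun p _ ↦ strongConvexOn_norm_sub_sq hs p) (I := P)
    fun x hx ↦ ?_
  simpa only [image_image] using
    isLUB_image_pow (forall_mem_image.2 fun p _ ↦ norm_nonneg (x - p)) (hH x hx) 2

theorem stmt_12_general (hs : Convex ℝ s) (hH : ∀ x ∈ s, IsLUB ((‖x - ·‖) '' P) (H x))
    {c x : E} (hc : c ∈ s) (hmin : IsMinOn H s c) (hx : x ∈ s) :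
    H c ^ 2 + ‖x - c‖ ^ 2 ≤ H x ^ 2 := by
  have hHc : 0 ≤ H c := by
    obtain ⟨p, hp⟩ := (hH c hc).nonempty.of_image
    exact (norm_nonneg (c - p)).trans ((hH c hc).1 (mem_image_of_mem _ hp))
  have hmin_sq : IsMinOn (fun y ↦ H y ^ 2) s c := fun y hy ↦ pow_le_pow_left₀ hHc (hmin hy) 2
  simpa using add_modulus_le_of_isMinOn (strongConvexOn_sq_of_isLUB_norm_sub hs hH) hc hmin_sq hx

end FarthestDistance

/-- Euclidean instance of the key lemma in its sharp quadratic form: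
`H(x)² ≥ r*² + ‖x − c‖²` for the farthest-distance function `H` of a finite set `P`,
its minimax center `c` and minimax radius `r* = H(c)`. -/
theorem stmt_12 {E : Type*} [NormedAddCommGroup E] [InnerProductSpace ℝ E]
    [FiniteDimensional ℝ E]
    (P : Finset E) (hP : P.Nonempty)
    (H : E → ℝ) (hH : ∀ x, H x = P.sup' hP fun p => ‖x - p‖)
    (c : E) (hc : ∀ y, H c ≤ H y) :
    ∀ x : E, H x ^ 2 ≥ H c ^ 2 + ‖x - c‖ ^ 2 := by
  have hlub : ∀ x, IsLUB ((‖x - ·‖) '' (P : Set E)) (H x) := fun x ↦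
    hH x ▸ isLUB_image_sup' hP _
  exact fun x ↦ stmt_12_general convex_univ (fun y _ ↦ hlub y) (mem_univ c) (fun y _ ↦ hc y)
    (mem_univ x)
end
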